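/- Let X, Y be Banach spaces, D ⊂ X open and convex, F : D → Y twice continuously Fréchet differentiable, x₀ ∈ D with F'(x₀) invertible. Suppose the affine covariant Lipschitz condition ‖F'(x₀)⁻¹[F''(y) − F''(x)]‖ ≤ L‖y − x‖ holds for all x, y ∈ D, and ‖F'(x₀)⁻¹F(x₀)‖ ≤ β, ‖F'(x₀)⁻¹F''(x₀)‖ ≤ η. If β < b := 2(η + 2√(η² + 2L)) / (3(η + √(η² + 2L))²), then: the Halley sequence (x_k) starting at x₀ is well defined, contained in B(x₀,t*), and converges to a point x* in the closed ball of radius t* about x₀ with F(x*) = 0, where t* is the smallest positive root of f(t) = β − t + (η/2)t² + (L/6)t³ in [0,r₁] with r₁ = 2/(η + √(η² + 2L)) the positive root of f'; x* is the unique zero of F in B(x₀,t**), where t** is the root of f in [r₁,∞); the error bound ‖x* − x_{k+1}‖ ≤ (t* − t_{k+1})·(‖x* − x_k‖/(t* − t_k))³ holds for all k, where (t_k) is the majorizing sequence for f; and ‖x* − x_{k+1}‖ ≤ [ (3(η + Lt*)² + 2L(1 − ηt* − Lt*²/2)) / (9(1 − ηt* − Lt*²/2)²) ]·‖x* − x_k‖³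 for all k. -/

import Mathlib

open Metric Set

/-!
Halley's method is affine covariant, so `F` may be replaced by `F'(x₀)⁻¹F` and the derivative at
`x₀` becomes the identity. A Halley step then satisfies two identities in terms of Taylor
remainders, one for the new residual `F(x_{k+1})` and one for the new error `x* - x_{k+1}`. Applied
to the cubic `f`, whose third derivative is the constant `L`, all terms of these identities have the
same sign; hence `‖F(x_k)‖ ≤ f(t_k)` and `‖x_{k+1} - x_k‖ ≤ t_{k+1} - t_k` propagate along
the iteration, and the error is multiplied by at most the cubic factor that occurs exactly for `f`.
Uniqueness follows by integrating `‖I - F'(x)‖ ≤ 1 + f'(‖x - x₀‖)` along the segment from `x*` to a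
second zero at distance less than `t**`, because `f` is negative between `t*` and `t**`.
-/

section MeanValue

variable {E G : Type*} [NormedAddCommGroup E] [NormedSpace ℝ E]
  [NormedAddCommGroup G] [NormedSpace ℝ G]

lemma norm_image_sub_le_of_norm_deriv_le_deriv_boundary {f f' : ℝ → E} {B B' : ℝ → ℝ} {a b : ℝ}
    (hab : a ≤ b) (hf : ∀ s ∈ Icc a b, HasDerivAt f (f' s) s) (hB : ∀ s, HasDerivAt B (B' s) s)
    (bound : ∀ s ∈ Icc a b, ‖f' s‖ ≤ B' s) :
    ‖f b - f a‖ ≤ B b - B a :=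
  image_norm_le_of_norm_deriv_right_le_deriv_boundary
    (f := fun s => f s - f a) (B := fun s => B s - B a)
    (fun s hs => ((hf s hs).continuousAt.sub continuousAt_const).continuousWithinAt)
    (fun s hs => ((hf s (Ico_subset_Icc_self hs)).sub_const _).hasDerivWithinAt)
    (by simp) (fun s => (hB s).sub_const _) (fun s hs => bound s (Ico_subset_Icc_self hs))
    (right_mem_Icc.2 hab)

lemma norm_sub_le_of_norm_deriv_le_mul_pow {f f' : ℝ → E} {C : ℝ} (n : ℕ)
    (hf : ∀ s ∈ Icc (0 : ℝ) 1, HasDerivAt f (f' s) s)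
    (bound : ∀ s ∈ Icc (0 : ℝ) 1, ‖f' s‖ ≤ C * s ^ n) :
    ‖f 1 - f 0‖ ≤ C / (n + 1) := by
  have hB (s : ℝ) : HasDerivAt (fun s : ℝ => C / (n + 1) * s ^ (n + 1)) (C * s ^ n) s := by
    refine ((hasDerivAt_pow (n + 1) s).const_mul (C / (n + 1))).congr_deriv ?_
    simp only [Nat.cast_add, Nat.cast_one, add_tsub_cancel_right]
    field_simp
  simpa using norm_image_sub_le_of_norm_deriv_le_deriv_boundary zero_le_one hf hB bound

variable {D : Set E} {x y : E} {C L : ℝ} {f : E → G} {f' : E → E →L[ℝ] G}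
  {f'' : E → E →L[ℝ] E →L[ℝ] G}

lemma norm_lineMap_sub_left {s : ℝ} (hs : 0 ≤ s) :
    ‖AffineMap.lineMap x y s - x‖ = s * ‖y - x‖ := by
  rw [← dist_eq_norm, dist_lineMap_left, Real.norm_of_nonneg hs, dist_eq_norm, norm_sub_rev]

lemma norm_sub_sub_fderiv_le_of_lipschitz_at (hD : StarConvex ℝ x D)
    (hf : ∀ z ∈ D, HasFDerivAt f (f' z) z) (hlip : ∀ z ∈ D, ‖f' z - f' x‖ ≤ L * ‖z - x‖)
    (hy : y ∈ D) :
    ‖f y - f x - f' x (y - x)‖ ≤ L / 2 * ‖y - x‖ ^ 2 := by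
  have hmem {s : ℝ} (hs : s ∈ Icc (0 : ℝ) 1) : AffineMap.lineMap x y s ∈ D :=
    hD.segment_subset hy (lineMap_mem_segment ℝ x y hs)
  have hderiv (s : ℝ) (hs : s ∈ Icc (0 : ℝ) 1) :
      HasDerivAt (fun s : ℝ => f (AffineMap.lineMap x y s) - s • f' x (y - x))
        ((f' (AffineMap.lineMap x y s) - f' x) (y - x)) s := by
    refine (((hf _ (hmem hs)).comp_hasDerivAt s AffineMap.hasDerivAt_lineMap).sub
      ((hasDerivAt_id s).smul_const (f' x (y - x)))).congr_deriv ?_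
    rw [one_smul, sub_apply]
  have hbound (s : ℝ) (hs : s ∈ Icc (0 : ℝ) 1) :
      ‖(f' (AffineMap.lineMap x y s) - f' x) (y - x)‖ ≤ L * ‖y - x‖ ^ 2 * s ^ 1 := by
    refine (ContinuousLinearMap.le_of_opNorm_le _ (hlip _ (hmem hs)) _).trans_eq ?_
    rw [norm_lineMap_sub_left hs.1]
    ring
  convert norm_sub_le_of_norm_deriv_le_mul_pow 1 hderiv hbound using 1
  · congr 1
    simp only [AffineMap.lineMap_apply_one, AffineMap.lineMap_apply_zero, one_smul, zero_smul]
    abel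
  · rw [Nat.cast_one]
    ring

/-- The remainder of the second-order Taylor expansion of `f` at `x`, with `f'` and `f''` standing
for the first two derivatives. -/
noncomputable def taylorRemainder₂ (f : E → G) (f' : E → E →L[ℝ] G) (f'' : E → E →L[ℝ] E →L[ℝ] G)
    (x y : E) : G :=
  f y - f x - f' x (y - x) - (2⁻¹ : ℝ) • f'' x (y - x) (y - x)

lemma norm_taylorRemainder₂_le_of_lipschitz_at (hD : StarConvex ℝ x D)
    (hf : ∀ z ∈ D, HasFDerivAt f (f' z) z) (hf' : ∀ z ∈ D, HasFDerivAt f' (f'' z) z)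
    (hlip : ∀ z ∈ D, ‖f'' z - f'' x‖ ≤ L * ‖z - x‖) (hy : y ∈ D) :
    ‖taylorRemainder₂ f f' f'' x y‖ ≤ L / 6 * ‖y - x‖ ^ 3 := by
  have hmem {s : ℝ} (hs : s ∈ Icc (0 : ℝ) 1) : AffineMap.lineMap x y s ∈ D :=
    hD.segment_subset hy (lineMap_mem_segment ℝ x y hs)
  have hderiv (s : ℝ) (hs : s ∈ Icc (0 : ℝ) 1) :
      HasDerivAt (fun s : ℝ => f (AffineMap.lineMap x y s) - s • f' x (y - x)
          - (s ^ 2 / 2) • f'' x (y - x) (y - x))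
        ((f' (AffineMap.lineMap x y s) - f' x - f'' x (AffineMap.lineMap x y s - x)) (y - x))
        s := by
    have hsq : HasDerivAt (fun s : ℝ => s ^ 2 / 2) s s := by
      simpa using (hasDerivAt_pow 2 s).div_const 2
    refine ((((hf _ (hmem hs)).comp_hasDerivAt s AffineMap.hasDerivAt_lineMap).sub
      ((hasDerivAt_id s).smul_const (f' x (y - x)))).sub
      (hsq.smul_const (f'' x (y - x) (y - x)))).congr_deriv ?_
    rw [AffineMap.lineMap_apply_module', add_sub_cancel_right, one_smul, map_smul, sub_apply,
      sub_apply, smul_apply]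
  have hbound (s : ℝ) (hs : s ∈ Icc (0 : ℝ) 1) :
      ‖(f' (AffineMap.lineMap x y s) - f' x - f'' x (AffineMap.lineMap x y s - x)) (y - x)‖
        ≤ L / 2 * ‖y - x‖ ^ 3 * s ^ 2 := by
    refine (ContinuousLinearMap.le_of_opNorm_le _
      (norm_sub_sub_fderiv_le_of_lipschitz_at hD hf' hlip (hmem hs)) _).trans_eq ?_
    rw [norm_lineMap_sub_left hs.1]
    ring
  convert norm_sub_le_of_norm_deriv_le_mul_pow 2 hderiv hbound using 1
  · congr 1
    simp only [taylorRemainder₂, AffineMap.lineMap_apply_one, AffineMap.lineMap_apply_zero,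
      one_smul, one_pow, one_div, zero_smul, zero_pow two_ne_zero, zero_div]
    abel
  · rw [Nat.cast_two]
    ring

lemma eq_of_image_eq_of_majorant_lt {g : E → E} {g' : E → E →L[ℝ] E} {ψ ψ' : ℝ → ℝ} {a ρ : ℝ}
    {x₀ : E} (hD : Convex ℝ D) (hg : ∀ x ∈ D, HasFDerivAt g (g' x) x)
    (hψ : ∀ r, HasDerivAt ψ (ψ' r) r) (hmono : MonotoneOn ψ' (Ici 0))
    (hbound : ∀ x ∈ D, ‖ContinuousLinearMap.id ℝ E - g' x‖ ≤ 1 + ψ' ‖x - x₀‖)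
    (hx : x ∈ D) (hy : y ∈ D) (hxa : ‖x - x₀‖ ≤ a) (hyρ : ‖y - x₀‖ ≤ ρ)
    (haρ : a < ρ) (hlt : ψ ρ < ψ a) (heq : g x = g y) : x = y := by
  have hmem {s : ℝ} (hs : s ∈ Icc (0 : ℝ) 1) : AffineMap.lineMap x y s ∈ D :=
    hD.lineMap_mem hx hy hs
  have hradius {s : ℝ} (hs : s ∈ Icc (0 : ℝ) 1) :
      ‖AffineMap.lineMap x y s - x₀‖ ≤ AffineMap.lineMap a ρ s := by
    have hsplit : AffineMap.lineMap x y s - x₀ = (1 - s) • (x - x₀) + s • (y - x₀) := by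
      rw [AffineMap.lineMap_apply_module]
      module
    have hs₀ : 0 ≤ s := hs.1
    have hs₁ : 0 ≤ 1 - s := sub_nonneg.2 hs.2
    rw [hsplit, AffineMap.lineMap_apply_module]
    refine (norm_add_le _ _).trans ?_
    rw [norm_smul, norm_smul, Real.norm_of_nonneg hs₀, Real.norm_of_nonneg hs₁, smul_eq_mul,
      smul_eq_mul]
    gcongr
  have hderiv (s : ℝ) (hs : s ∈ Icc (0 : ℝ) 1) :
      HasDerivAt (fun s : ℝ => AffineMap.lineMap x y s - g (AffineMap.lineMap x y s))
        ((ContinuousLinearMap.id ℝ E - g' (AffineMap.lineMap x y s)) (y - x)) s :=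
    AffineMap.hasDerivAt_lineMap.sub
      ((hg _ (hmem hs)).comp_hasDerivAt s AffineMap.hasDerivAt_lineMap)
  have hderivB (s : ℝ) :
      HasDerivAt (fun s : ℝ => ‖y - x‖ * (s + ψ (AffineMap.lineMap a ρ s) / (ρ - a)))
        ((1 + ψ' (AffineMap.lineMap a ρ s)) * ‖y - x‖) s := by
    refine (((hasDerivAt_id s).add (((hψ _).comp s
      AffineMap.hasDerivAt_lineMap).div_const (ρ - a))).const_mul ‖y - x‖).congr_deriv ?_
    rw [mul_div_cancel_right₀ _ (sub_pos.2 haρ).ne', mul_comm]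
  have hbound' (s : ℝ) (hs : s ∈ Icc (0 : ℝ) 1) :
      ‖(ContinuousLinearMap.id ℝ E - g' (AffineMap.lineMap x y s)) (y - x)‖
        ≤ (1 + ψ' (AffineMap.lineMap a ρ s)) * ‖y - x‖ := by
    refine ContinuousLinearMap.le_of_opNorm_le _ ((hbound _ (hmem hs)).trans ?_) _
    gcongr
    exact hmono (norm_nonneg _) ((norm_nonneg _).trans (hradius hs)) (hradius hs)
  -- `‖y - x‖ ≤ ‖y - x‖ * (1 + σ)`, where `σ` is the slope of the chord of `ψ` over `[a, ρ]`.
  have hmain := norm_image_sub_le_of_norm_deriv_le_deriv_boundary zero_le_one hderiv hderivB hbound'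
  simp only [AffineMap.lineMap_apply_one, AffineMap.lineMap_apply_zero, heq,
    sub_sub_sub_cancel_right] at hmain
  by_contra hne
  have hpos : 0 < ‖y - x‖ := norm_sub_pos_iff.2 (Ne.symm hne)
  have hslope : (ψ ρ - ψ a) / (ρ - a) < 0 := div_neg_of_neg_of_pos (sub_neg.2 hlt) (sub_pos.2 haρ)
  have hcontr := mul_neg_of_pos_of_neg hpos hslope
  rw [sub_div] at hcontr
  linarith

end MeanValue

section Operators

variable {𝕜 E : Type*} [NontriviallyNormedField 𝕜] [NormedAddCommGroup E] [NormedSpace 𝕜 E]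

lemma exists_continuousLinearEquiv_eq_of_norm_id_sub_lt_one [CompleteSpace E] {A : E →L[𝕜] E}
    (hA : ‖ContinuousLinearMap.id 𝕜 E - A‖ < 1) : ∃ T : E ≃L[𝕜] E, (T : E →L[𝕜] E) = A :=
  ⟨ContinuousLinearEquiv.ofUnit (Units.oneSub _ hA), sub_sub_cancel (ContinuousLinearMap.id 𝕜 E) A⟩

lemma norm_symm_le_of_norm_id_sub_le {T : E ≃L[𝕜] E} {c : ℝ}
    (hT : ‖ContinuousLinearMap.id 𝕜 E - T‖ ≤ c) (hc : c < 1) :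
    ‖(T.symm : E →L[𝕜] E)‖ ≤ (1 - c)⁻¹ := by
  have hc' : 0 < 1 - c := sub_pos.2 hc
  refine ContinuousLinearMap.opNorm_le_bound _ (inv_nonneg.2 hc'.le) fun w => ?_
  have hdiff : ‖T.symm w - w‖ ≤ c * ‖T.symm w‖ := by
    simpa using ContinuousLinearMap.le_of_opNorm_le _ hT (T.symm w)
  rw [ContinuousLinearEquiv.coe_coe, inv_mul_eq_div, le_div_iff₀ hc']
  linarith [norm_sub_norm_le (T.symm w) w]

end Operators

section MajorizedSequences

lemma summable_sub_of_monotone_of_le {t : ℕ → ℝ} {a : ℝ} (ht : Monotone t) (hta : ∀ k, t k ≤ a) :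
    Summable fun k => t (k + 1) - t k := by
  refine summable_of_sum_range_le (c := a - t 0) (fun k => sub_nonneg.2 (ht k.le_succ)) fun n => ?_
  rw [Finset.sum_range_sub]
  exact sub_le_sub_right (hta n) _

lemma exists_tendsto_of_dist_le_sub {α : Type*} [PseudoMetricSpace α] [CompleteSpace α] {x : ℕ → α}
    {t : ℕ → ℝ} {a : ℝ} (hx : ∀ k, dist (x k) (x (k + 1)) ≤ t (k + 1) - t k)
    (hta : ∀ k, t k ≤ a) :
    ∃ y, Filter.Tendsto x Filter.atTop (nhds y) ∧ ∀ k, dist (x k) y ≤ a - t k := by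
  have ht : Monotone t :=
    monotone_nat_of_le_succ fun k => sub_nonneg.1 (dist_nonneg.trans (hx k))
  have hsum := summable_sub_of_monotone_of_le ht hta
  obtain ⟨y, hy⟩ := cauchySeq_tendsto_of_complete (cauchySeq_of_dist_le_of_summable _ hx hsum)
  refine ⟨y, hy, fun k => (dist_le_tsum_of_dist_le_of_tendsto _ hx hsum hy k).trans ?_⟩
  refine Real.tsum_le_of_sum_range_le (fun n => sub_nonneg.2 (ht (k + n).le_succ)) fun n => ?_
  have htel := Finset.sum_range_sub (fun j => t (k + j)) n
  simp only [← add_assoc, add_zero] at htel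
  rw [htel]
  exact sub_le_sub_right (hta _) _

end MajorizedSequences

section HalleyStep

variable {X Y Z : Type*} [NormedAddCommGroup X] [NormedSpace ℝ X] [NormedAddCommGroup Y]
  [NormedSpace ℝ Y] [NormedAddCommGroup Z] [NormedSpace ℝ Z]
  {F : X → Y} {F' : X → X →L[ℝ] Y} {F'' : X → X →L[ℝ] X →L[ℝ] Y} {x x' z : X}
  {e : X ≃L[ℝ] Y} {m : X ≃L[ℝ] X} {p q l s φ L : ℝ}

/-- The operator `L_F(x) = ½F'(x)⁻¹F''(x)F'(x)⁻¹F(x)` of Halley's method, as a function of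
`e = F'(x)`, `B = F''(x)` and `y = F(x)`. -/
noncomputable def halleyOperator (e : X ≃L[ℝ] Y) (B : X →L[ℝ] X →L[ℝ] Y) (y : Y) : X →L[ℝ] X :=
  (2⁻¹ : ℝ) • (e.symm : Y →L[ℝ] X).comp (B (e.symm y))

lemma halleyOperator_apply (B : X →L[ℝ] X →L[ℝ] Y) (y : Y) (v : X) :
    halleyOperator e B y v = (2⁻¹ : ℝ) • e.symm (B (e.symm y) v) :=
  rfl

lemma norm_half_smul_apply_apply_le {B : X →L[ℝ] X →L[ℝ] Y} {v w : X} {r : ℝ} (hB : ‖B‖ ≤ q)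
    (hv : ‖v‖ ≤ r) (hw : ‖w‖ ≤ s) : ‖(2⁻¹ : ℝ) • B v w‖ ≤ q / 2 * r * s := by
  rw [norm_smul, norm_inv, Real.norm_two]
  calc 2⁻¹ * ‖B v w‖ ≤ 2⁻¹ * (q * r * s) := by gcongr; exact B.le_of_opNorm₂_le_of_le hB hv hw
    _ = q / 2 * r * s := by ring

lemma norm_symm_apply_le (he : ‖(e.symm : Y →L[ℝ] X)‖ ≤ p⁻¹) {y : Y} (hy : ‖y‖ ≤ φ) :
    ‖e.symm y‖ ≤ φ / p := by
  rw [div_eq_inv_mul]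
  exact ContinuousLinearMap.le_of_opNorm_le_of_le _ he hy

lemma norm_halleyOperator_le {B : X →L[ℝ] X →L[ℝ] Y} {y : Y}
    (he : ‖(e.symm : Y →L[ℝ] X)‖ ≤ p⁻¹) (hB : ‖B‖ ≤ q) (hy : ‖y‖ ≤ φ) :
    ‖halleyOperator e B y‖ ≤ φ * q / (2 * p ^ 2) := by
  have hBu : ‖B (e.symm y)‖ ≤ q * (φ / p) :=
    ContinuousLinearMap.le_of_opNorm_le_of_le _ hB (norm_symm_apply_le he hy)
  calc ‖halleyOperator e B y‖
      ≤ 2⁻¹ * (‖(e.symm : Y →L[ℝ] X)‖ * ‖B (e.symm y)‖) := by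
        rw [halleyOperator, norm_smul, norm_inv, Real.norm_two]
        gcongr
        exact ContinuousLinearMap.opNorm_comp_le _ _
    _ ≤ 2⁻¹ * (p⁻¹ * (q * (φ / p))) := by
        gcongr
        exact (norm_nonneg _).trans he
    _ = φ * q / (2 * p ^ 2) := by ring

/-- `x'` is obtained from `x` by one well-defined step of Halley's method for `F`: the derivative
`e = F' x` and the operator `m = I - L_F(x)` are invertible. Here `F'` and `F''` stand for the first
two derivatives of `F`. -/
structure IsHalleyStep (F : X → Y) (F' : X → X →L[ℝ] Y) (F'' : X → X →L[ℝ] X →L[ℝ] Y) (x : X)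
    (e : X ≃L[ℝ] Y) (m : X ≃L[ℝ] X) (x' : X) : Prop where
  deriv_eq : (e : X →L[ℝ] Y) = F' x
  operator_eq : (m : X →L[ℝ] X) = ContinuousLinearMap.id ℝ X - halleyOperator e (F'' x) (F x)
  next_eq : x' = x - m.symm (e.symm (F x))

/-- One step of Halley's method as a total function; it is meaningful only where `F' x` and
`I - L_F(x)` are invertible, since `ContinuousLinearMap.inverse` is `0` on other operators. -/
noncomputable def halleyMap (F : X → Y) (F' : X → X →L[ℝ] Y) (F'' : X → X →L[ℝ] X →L[ℝ] Y)
    (x : X) : X :=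
  x - (ContinuousLinearMap.id ℝ X - (2⁻¹ : ℝ) •
    (F' x).inverse.comp (F'' x ((F' x).inverse (F x)))).inverse ((F' x).inverse (F x))

lemma isHalleyStep_halleyMap (he : (e : X →L[ℝ] Y) = F' x)
    (hm : (m : X →L[ℝ] X) = ContinuousLinearMap.id ℝ X - halleyOperator e (F'' x) (F x)) :
    IsHalleyStep F F' F'' x e m (halleyMap F F' F'' x) := by
  refine ⟨he, hm, ?_⟩
  rw [halleyOperator] at hm
  simp only [halleyMap, ← he, ContinuousLinearMap.inverse_equiv, ContinuousLinearEquiv.coe_coe,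
    ← hm]

namespace IsHalleyStep

lemma apply_sub (h : IsHalleyStep F F' F'' x e m x') : m (x' - x) = -e.symm (F x) := by
  rw [h.next_eq, sub_sub_cancel_left, map_neg, m.apply_symm_apply]

lemma norm_id_sub_le (h : IsHalleyStep F F' F'' x e m x')
    (hK : ‖halleyOperator e (F'' x) (F x)‖ ≤ l) : ‖ContinuousLinearMap.id ℝ X - m‖ ≤ l := by
  rwa [h.operator_eq, sub_sub_cancel]

lemma norm_le_of_operator_apply_le (h : IsHalleyStep F F' F'' x e m x')
    (hK : ‖halleyOperator e (F'' x) (F x)‖ ≤ l) (hl : l < 1) {v : X} (hv : ‖m v‖ ≤ s) :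
    ‖v‖ ≤ s / (1 - l) := by
  rw [← m.symm_apply_apply v]
  exact norm_symm_apply_le (norm_symm_le_of_norm_id_sub_le (h.norm_id_sub_le hK) hl) hv

lemma norm_sub_le (h : IsHalleyStep F F' F'' x e m x') (he : ‖(e.symm : Y →L[ℝ] X)‖ ≤ p⁻¹)
    (hφ : ‖F x‖ ≤ φ) (hK : ‖halleyOperator e (F'' x) (F x)‖ ≤ l) (hl : l < 1) :
    ‖x' - x‖ ≤ φ / p / (1 - l) := by
  refine h.norm_le_of_operator_apply_le hK hl ?_
  rw [h.apply_sub, norm_neg]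
  exact norm_symm_apply_le he hφ

lemma eq_taylorRemainder₂_add (h : IsHalleyStep F F' F'' x e m x') :
    F x' = taylorRemainder₂ F F' F'' x x'
      + (2⁻¹ : ℝ) • F'' x (halleyOperator e (F'' x) (F x) (x' - x)) (x' - x) := by
  set v := x' - x
  set K := halleyOperator e (F'' x) (F x)
  have hFx : F x = F' x (e.symm (F x)) := by
    rw [← h.deriv_eq, ContinuousLinearEquiv.coe_coe, e.apply_symm_apply]
  have hKv : K v = e.symm (F x) + v := by
    have hmv : v - K v = -e.symm (F x) := by
      rw [← h.apply_sub, ← ContinuousLinearEquiv.coe_coe m, h.operator_eq]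
      rfl
    rw [← sub_eq_zero, ← neg_eq_zero, ← sub_eq_zero.2 hmv]
    abel
  have hlinear : F x + F' x v = (2⁻¹ : ℝ) • F'' x (e.symm (F x)) v := by
    nth_rw 1 [hFx]
    rw [← map_add, ← hKv, halleyOperator_apply, map_smul, ← h.deriv_eq,
      ContinuousLinearEquiv.coe_coe, e.apply_symm_apply]
  rw [hKv, map_add, add_apply, smul_add, ← hlinear, taylorRemainder₂]
  abel

lemma norm_image_le (h : IsHalleyStep F F' F'' x e m x') (hq : ‖F'' x‖ ≤ q)
    (hK : ‖halleyOperator e (F'' x) (F x)‖ ≤ l) (hs : ‖x' - x‖ ≤ s) (hL : 0 ≤ L)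
    (hR : ‖taylorRemainder₂ F F' F'' x x'‖ ≤ L / 6 * ‖x' - x‖ ^ 3) :
    ‖F x'‖ ≤ q / 2 * l * s ^ 2 + L / 6 * s ^ 3 := by
  have hquad := norm_half_smul_apply_apply_le hq
    (ContinuousLinearMap.le_of_opNorm_le_of_le _ hK hs) hs
  calc ‖F x'‖ ≤ L / 6 * ‖x' - x‖ ^ 3 + q / 2 * (l * s) * s := by
        rw [h.eq_taylorRemainder₂_add]
        exact norm_add_le_of_le hR hquad
    _ ≤ L / 6 * s ^ 3 + q / 2 * (l * s) * s := by gcongr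
    _ = q / 2 * l * s ^ 2 + L / 6 * s ^ 3 := by ring

end IsHalleyStep

/-- The factor in front of the cube of the old error in the error bound for a Halley step, where
`p⁻¹` bounds `F'(x)⁻¹`, `q` bounds `F''(x)`, `L` is a Lipschitz constant of `F''`, `l` bounds
`L_F(x)` and `d` is the old error. -/
noncomputable def halleyErrorCoeff (p q L l d : ℝ) : ℝ :=
  (L / (6 * p) + q ^ 2 / (4 * p ^ 2) + L * q * d / (12 * p ^ 2)) / (1 - l)

namespace IsHalleyStep

lemma newton_error_eq (h : IsHalleyStep F F' F'' x e m x') (hz : F z = 0) :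
    z - x + e.symm (F x) = -e.symm (taylorRemainder₂ F F' F'' x z
      + (2⁻¹ : ℝ) • F'' x (z - x) (z - x)) := by
  apply e.injective
  rw [map_neg, map_add, e.apply_symm_apply, e.apply_symm_apply, ← ContinuousLinearEquiv.coe_coe,
    h.deriv_eq, taylorRemainder₂, hz]
  abel

lemma operator_apply_error_eq (h : IsHalleyStep F F' F'' x e m x') (hz : F z = 0) :
    m (z - x') = -e.symm (taylorRemainder₂ F F' F'' x z
      + (2⁻¹ : ℝ) • F'' x (z - x + e.symm (F x)) (z - x)) := by
  have hsplit : m (z - x') = z - x + e.symm (F x)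
      - (2⁻¹ : ℝ) • e.symm (F'' x (e.symm (F x)) (z - x)) := by
    rw [← sub_sub_sub_cancel_right z x' x, map_sub, h.apply_sub, ← ContinuousLinearEquiv.coe_coe m,
      h.operator_eq, sub_apply, halleyOperator_apply, ContinuousLinearMap.id_apply]
    abel
  rw [hsplit, map_add (F'' x), add_apply, smul_add, ← add_assoc, map_add, neg_add,
    ← h.newton_error_eq hz, map_smul, ← sub_eq_add_neg]

lemma norm_error_le (h : IsHalleyStep F F' F'' x e m x') (he : ‖(e.symm : Y →L[ℝ] X)‖ ≤ p⁻¹)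
    (hq : ‖F'' x‖ ≤ q) (hK : ‖halleyOperator e (F'' x) (F x)‖ ≤ l) (hl : l < 1) (hz : F z = 0)
    (hR : ‖taylorRemainder₂ F F' F'' x z‖ ≤ L / 6 * ‖z - x‖ ^ 3) :
    ‖z - x'‖ ≤ halleyErrorCoeff p q L l ‖z - x‖ * ‖z - x‖ ^ 3 := by
  have hnewton : ‖z - x + e.symm (F x)‖
      ≤ (L / 6 * ‖z - x‖ ^ 3 + q / 2 * ‖z - x‖ * ‖z - x‖) / p := by
    rw [h.newton_error_eq hz, norm_neg]
    exact norm_symm_apply_le he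
      (norm_add_le_of_le hR (norm_half_smul_apply_apply_le hq le_rfl le_rfl))
  have hm : ‖m (z - x')‖ ≤ (L / 6 * ‖z - x‖ ^ 3
      + q / 2 * ((L / 6 * ‖z - x‖ ^ 3 + q / 2 * ‖z - x‖ * ‖z - x‖) / p) * ‖z - x‖) / p := by
    rw [h.operator_apply_error_eq hz, norm_neg]
    exact norm_symm_apply_le he
      (norm_add_le_of_le hR (norm_half_smul_apply_apply_le hq hnewton le_rfl))
  refine (h.norm_le_of_operator_apply_le hK hl hm).trans_eq ?_
  rw [halleyErrorCoeff]
  ring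

lemma of_comp (A : Y ≃L[ℝ] Z) {e : X ≃L[ℝ] Z}
    (h : IsHalleyStep (fun x => A (F x)) (fun x => (A : Y →L[ℝ] Z).comp (F' x))
      (fun x => (ContinuousLinearMap.compL ℝ X Y Z (A : Y →L[ℝ] Z)).comp (F'' x)) x e m x') :
    IsHalleyStep F F' F'' x (e.trans A.symm) m x' := by
  refine ⟨?_, ?_, ?_⟩
  · ext v
    have hv : e v = A (F' x v) := congrArg (fun T : X →L[ℝ] Z => T v) h.deriv_eq
    simp [hv]
  · exact h.operator_eq
  · exact h.next_eq

end IsHalleyStep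

lemma exists_isHalleyStep_halleyMap [CompleteSpace X] {F : X → X} {F' : X → X →L[ℝ] X}
    {F'' : X → X →L[ℝ] X →L[ℝ] X} (hp : 0 < p)
    (hF' : ‖ContinuousLinearMap.id ℝ X - F' x‖ ≤ 1 - p) (hq : ‖F'' x‖ ≤ q) (hφ : ‖F x‖ ≤ φ)
    (hl : φ * q / (2 * p ^ 2) < 1) :
    ∃ e m : X ≃L[ℝ] X, IsHalleyStep F F' F'' x e m (halleyMap F F' F'' x) ∧
      ‖(e.symm : X →L[ℝ] X)‖ ≤ p⁻¹ ∧
      ‖halleyOperator e (F'' x) (F x)‖ ≤ φ * q / (2 * p ^ 2) := by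
  have hp' : 1 - p < 1 := by linarith
  obtain ⟨e, he⟩ := exists_continuousLinearEquiv_eq_of_norm_id_sub_lt_one (hF'.trans_lt hp')
  have hsymm : ‖(e.symm : X →L[ℝ] X)‖ ≤ p⁻¹ := by
    simpa only [sub_sub_cancel] using norm_symm_le_of_norm_id_sub_le (he.symm ▸ hF') hp'
  have hK := norm_halleyOperator_le hsymm hq hφ
  obtain ⟨m, hm⟩ := exists_continuousLinearEquiv_eq_of_norm_id_sub_lt_one
    (A := ContinuousLinearMap.id ℝ X - halleyOperator e (F'' x) (F x))
    (by rw [sub_sub_cancel]; exact hK.trans_lt hl)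
  exact ⟨e, m, isHalleyStep_halleyMap he hm, hsymm, hK⟩

end HalleyStep

section Majorant

/-- The cubic `f` majorizing the normalized operator. -/
noncomputable def majorant (β η L s : ℝ) : ℝ := β - s + η / 2 * s ^ 2 + L / 6 * s ^ 3

/-- The derivative of `majorant β η L`. -/
noncomputable def majorantDeriv (η L s : ℝ) : ℝ := -1 + η * s + L / 2 * s ^ 2

/-- `L_f(t)` for the majorizing cubic `f`. -/
noncomputable def majorantRatio (β η L t : ℝ) : ℝ :=
  majorant β η L t * (η + L * t) / (2 * majorantDeriv η L t ^ 2)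

/-- One step of Halley's method for the majorizing cubic. -/
noncomputable def majorantHalley (β η L t : ℝ) : ℝ :=
  t - 1 / (1 - majorantRatio β η L t) * (majorant β η L t / majorantDeriv η L t)

/-- The coefficient `halleyErrorCoeff` of a Halley step for the majorizing cubic `f` at `t`, where
`-f' t` bounds `F'` from below and `f'' t` bounds `F''` from above. -/
noncomputable def majorantErrorCoeff (β η L t d : ℝ) : ℝ :=
  halleyErrorCoeff (-majorantDeriv η L t) (η + L * t) L (majorantRatio β η L t) d

/-- `a` is a positive root of the majorizing cubic to the left of its minimizer. -/
structure IsDescendingRoot (β η L a : ℝ) : Prop where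
  pos : 0 < a
  eta_pos : 0 < η
  lipschitz_nonneg : 0 ≤ L
  majorant_eq_zero : majorant β η L a = 0
  majorantDeriv_neg : majorantDeriv η L a < 0

variable {β η L a b t d d' ρ r : ℝ}

lemma majorant_zero : majorant β η L 0 = β := by simp [majorant]

lemma hasDerivAt_majorant (s : ℝ) : HasDerivAt (majorant β η L) (majorantDeriv η L s) s := by
  refine ((((hasDerivAt_id s).const_sub β).add ((hasDerivAt_pow 2 s).const_mul (η / 2))).add
    ((hasDerivAt_pow 3 s).const_mul (L / 6))).congr_deriv ?_
  rw [majorantDeriv, Nat.cast_two, Nat.cast_ofNat]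
  ring

lemma majorantDeriv_strictMonoOn (hη : 0 < η) (hL : 0 ≤ L) :
    StrictMonoOn (majorantDeriv η L) (Ici 0) := by
  intro s hs r _ hsr
  have hs₀ : 0 ≤ s := hs
  calc -1 + η * s + L / 2 * s ^ 2 ≤ -1 + η * s + L / 2 * r ^ 2 := by gcongr
    _ < -1 + η * r + L / 2 * r ^ 2 := by gcongr

lemma majorant_neg_of_between_roots (hη : 0 < η) (hL : 0 ≤ L) (ha : 0 ≤ a) (haρ : a < ρ)
    (hρb : ρ < b) (hfa : majorant β η L a = 0) (hfb : majorant β η L b = 0) :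
    majorant β η L ρ < 0 := by
  have hderiv : deriv (majorant β η L) = majorantDeriv η L :=
    funext fun s => (hasDerivAt_majorant s).deriv
  have hconv : StrictConvexOn ℝ (Ici 0) (majorant β η L) :=
    StrictMonoOn.strictConvexOn_of_deriv (convex_Ici 0)
      (fun s _ => (hasDerivAt_majorant s).continuousAt.continuousWithinAt)
      (hderiv ▸ (majorantDeriv_strictMonoOn hη hL).mono interior_subset)
  have hab : a < b := haρ.trans hρb
  have hlt := hconv.lt_on_openSegment ha (ha.trans hab.le) hab.ne (z := ρ)
    (by rw [openSegment_eq_Ioo hab]; exact ⟨haρ, hρb⟩)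
  rwa [hfa, hfb, max_self] at hlt

lemma mul_add_sqrt_eq_two (hη : 0 < η) (hr : r = 2 / (η + √(η ^ 2 + 2 * L))) :
    r * (η + √(η ^ 2 + 2 * L)) = 2 := by
  rw [hr, div_mul_cancel₀]
  positivity

lemma lipschitz_mul_eq_sqrt_sub (hη : 0 < η) (hL : 0 ≤ L)
    (hr : r = 2 / (η + √(η ^ 2 + 2 * L))) : L * r = √(η ^ 2 + 2 * L) - η := by
  have hsq : √(η ^ 2 + 2 * L) ^ 2 = η ^ 2 + 2 * L := Real.sq_sqrt (by positivity)
  have hpos : 0 < η + √(η ^ 2 + 2 * L) := by positivity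
  refine mul_right_cancel₀ hpos.ne' ?_
  linear_combination L * mul_add_sqrt_eq_two hη hr - hsq

lemma majorantDeriv_eq_zero (hη : 0 < η) (hL : 0 ≤ L) (hr : r = 2 / (η + √(η ^ 2 + 2 * L))) :
    majorantDeriv η L r = 0 := by
  unfold majorantDeriv
  linear_combination r / 2 * lipschitz_mul_eq_sqrt_sub hη hL hr + mul_add_sqrt_eq_two hη hr / 2

lemma majorant_minimizer_neg (hη : 0 < η) (hL : 0 ≤ L) (hr : r = 2 / (η + √(η ^ 2 + 2 * L)))
    (hβ : β < 2 * (η + 2 * √(η ^ 2 + 2 * L)) / (3 * (η + √(η ^ 2 + 2 * L)) ^ 2)) :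
    majorant β η L r < 0 := by
  have hbound : 2 * (η + 2 * √(η ^ 2 + 2 * L)) / (3 * (η + √(η ^ 2 + 2 * L)) ^ 2)
      = r - η / 2 * r ^ 2 - L / 6 * r ^ 3 := by
    calc _ = r ^ 2 * (η + 2 * √(η ^ 2 + 2 * L)) / 6 := by
          rw [hr]
          field_simp
          ring
      _ = _ := by
          linear_combination r / 2 * mul_add_sqrt_eq_two hη hr
            + r ^ 2 / 6 * lipschitz_mul_eq_sqrt_sub hη hL hr
  unfold majorant
  linarith

lemma isDescendingRoot_of_lt (hη : 0 < η) (hL : 0 ≤ L) (hβ : 0 < β) (ha : 0 ≤ a) (har : a < r)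
    (hf : majorant β η L a = 0) (hf' : majorantDeriv η L r = 0) : IsDescendingRoot β η L a where
  pos := ha.lt_of_ne fun h => hβ.ne (hf.symm.trans (h ▸ majorant_zero))
  eta_pos := hη
  lipschitz_nonneg := hL
  majorant_eq_zero := hf
  majorantDeriv_neg := hf' ▸ majorantDeriv_strictMonoOn hη hL ha (ha.trans har.le) har

lemma majorantDeriv_eq_expansion :
    -majorantDeriv η L t
      = -majorantDeriv η L a + (η + L * t) * (a - t) + L / 2 * (a - t) ^ 2 := by
  unfold majorantDeriv
  ring

lemma majorant_eq_expansion (ha : majorant β η L a = 0) :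
    majorant β η L t = -majorantDeriv η L t * (a - t) - (η + L * t) / 2 * (a - t) ^ 2
      - L / 6 * (a - t) ^ 3 := by
  unfold majorant at ha ⊢
  unfold majorantDeriv
  linear_combination ha

lemma majorantHalley_sub :
    majorantHalley β η L t - t
      = majorant β η L t / -majorantDeriv η L t / (1 - majorantRatio β η L t) := by
  rw [majorantHalley, div_neg]
  ring

namespace IsDescendingRoot

lemma eta_add_mul_pos (h : IsDescendingRoot β η L a) (ht : 0 ≤ t) : 0 < η + L * t :=
  add_pos_of_pos_of_nonneg h.eta_pos (mul_nonneg h.lipschitz_nonneg ht)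

lemma neg_majorantDeriv_le (h : IsDescendingRoot β η L a) (ht : 0 ≤ t) (hta : t < a) :
    -majorantDeriv η L a ≤ -majorantDeriv η L t :=
  neg_le_neg ((majorantDeriv_strictMonoOn h.eta_pos h.lipschitz_nonneg).monotoneOn ht
    (ht.trans hta.le) hta.le)

lemma neg_majorantDeriv_pos (h : IsDescendingRoot β η L a) (ht : 0 ≤ t) (hta : t < a) :
    0 < -majorantDeriv η L t :=
  (neg_pos.2 h.majorantDeriv_neg).trans_le (h.neg_majorantDeriv_le ht hta)

lemma neg_majorantDeriv_le_one (h : IsDescendingRoot β η L a) (ht : 0 ≤ t) :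
    -majorantDeriv η L t ≤ 1 := by
  have hη := h.eta_pos
  have hL := h.lipschitz_nonneg
  have hpos : 0 ≤ η * t + L / 2 * t ^ 2 := by positivity
  unfold majorantDeriv
  linarith

lemma majorant_pos (h : IsDescendingRoot β η L a) (ht : 0 ≤ t) (hta : t < a) :
    0 < majorant β η L t := by
  have hL := h.lipschitz_nonneg
  have : 0 < a - t := sub_pos.2 hta
  have hq := h.eta_add_mul_pos ht
  have hP : 0 < -majorantDeriv η L a := neg_pos.2 h.majorantDeriv_neg
  calc 0 < -majorantDeriv η L a * (a - t) + (η + L * t) / 2 * (a - t) ^ 2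
        + L / 3 * (a - t) ^ 3 := by positivity
    _ = majorant β η L t := by
      rw [majorant_eq_expansion h.majorant_eq_zero, majorantDeriv_eq_expansion (t := t) (a := a)]
      ring

lemma majorantRatio_nonneg (h : IsDescendingRoot β η L a) (ht : 0 ≤ t) (hta : t < a) :
    0 ≤ majorantRatio β η L t :=
  div_nonneg (mul_nonneg (h.majorant_pos ht hta).le (h.eta_add_mul_pos ht).le) (by positivity)

lemma majorantRatio_le_quarter (h : IsDescendingRoot β η L a) (ht : 0 ≤ t) (hta : t < a) :
    majorantRatio β η L t ≤ 1 / 4 := by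
  have hL := h.lipschitz_nonneg
  have : 0 < a - t := sub_pos.2 hta
  have hq := h.eta_add_mul_pos ht
  have hp := h.neg_majorantDeriv_pos ht hta
  have hcubic : 0 ≤ L * (a - t) ^ 3 * (η + L * t) := by positivity
  rw [majorantRatio, ← neg_sq (majorantDeriv η L t), div_le_iff₀ (by positivity),
    majorant_eq_expansion h.majorant_eq_zero]
  nlinarith [sq_nonneg (-majorantDeriv η L t - (η + L * t) * (a - t))]

lemma one_sub_majorantRatio_pos (h : IsDescendingRoot β η L a) (ht : 0 ≤ t) (hta : t < a) :
    0 < 1 - majorantRatio β η L t := by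
  linarith [h.majorantRatio_le_quarter ht hta]

lemma le_majorantHalley_sub (h : IsDescendingRoot β η L a) (ht : 0 ≤ t) (hta : t < a) :
    majorant β η L t ≤ majorantHalley β η L t - t := by
  have hp := h.neg_majorantDeriv_pos ht hta
  have hl := h.one_sub_majorantRatio_pos ht hta
  have hφ := (h.majorant_pos ht hta).le
  rw [majorantHalley_sub, div_div, le_div_iff₀ (by positivity)]
  refine mul_le_of_le_one_right hφ (mul_le_one₀ (h.neg_majorantDeriv_le_one ht) hl.le ?_)
  linarith [h.majorantRatio_nonneg ht hta]

lemma two_mul_sq_mul_majorantRatio (h : IsDescendingRoot β η L a) (ht : 0 ≤ t) (hta : t < a) :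
    2 * majorantDeriv η L t ^ 2 * majorantRatio β η L t = majorant β η L t * (η + L * t) :=
  mul_div_cancel₀ _ (mul_ne_zero two_ne_zero
    (pow_ne_zero 2 (neg_pos.1 (h.neg_majorantDeriv_pos ht hta)).ne))

lemma majorantHalley_sub_mul (h : IsDescendingRoot β η L a) (ht : 0 ≤ t) (hta : t < a) :
    (majorantHalley β η L t - t) * (-majorantDeriv η L t * (1 - majorantRatio β η L t))
      = majorant β η L t := by
  rw [majorantHalley_sub, div_div, div_mul_cancel₀]
  exact (mul_pos (h.neg_majorantDeriv_pos ht hta) (h.one_sub_majorantRatio_pos ht hta)).ne'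

lemma sub_majorantHalley_eq (h : IsDescendingRoot β η L a) (ht : 0 ≤ t) (hta : t < a) :
    a - majorantHalley β η L t = majorantErrorCoeff β η L t (a - t) * (a - t) ^ 3 := by
  have hp := h.neg_majorantDeriv_pos ht hta
  have hl := h.one_sub_majorantRatio_pos ht hta
  have hratio := h.two_mul_sq_mul_majorantRatio ht hta
  have hstep := h.majorantHalley_sub_mul ht hta
  have hφ := majorant_eq_expansion (t := t) h.majorant_eq_zero
  rw [← neg_sq] at hratio
  rw [majorantErrorCoeff, halleyErrorCoeff]
  set p := -majorantDeriv η L t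
  set q := η + L * t
  have hcoeff : (L / (6 * p) + q ^ 2 / (4 * p ^ 2) + L * q * (a - t) / (12 * p ^ 2))
        / (1 - majorantRatio β η L t) * (a - t) ^ 3
      = (a - t) ^ 3 * (2 * p * L + 3 * q ^ 2 + L * q * (a - t))
        / (12 * p ^ 2 * (1 - majorantRatio β η L t)) := by
    field_simp
    ring
  rw [hcoeff, eq_div_iff (by positivity)]
  linear_combination (-6 * (a - t)) * hratio - 12 * p * hstep
    - (6 * (a - t) * q + 12 * p) * hφ

lemma sub_majorantHalley_mul_div_cube (h : IsDescendingRoot β η L a) (ht : 0 ≤ t) (hta : t < a) :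
    (a - majorantHalley β η L t) * (d / (a - t)) ^ 3
      = majorantErrorCoeff β η L t (a - t) * d ^ 3 := by
  have hat : (a - t) ^ 3 ≠ 0 := pow_ne_zero 3 (sub_pos.2 hta).ne'
  rw [h.sub_majorantHalley_eq ht hta, div_pow, mul_assoc, mul_div_cancel₀ _ hat]

lemma majorantErrorCoeff_pos (h : IsDescendingRoot β η L a) (ht : 0 ≤ t) (hta : t < a)
    (hd : 0 ≤ d) : 0 < majorantErrorCoeff β η L t d := by
  have hL := h.lipschitz_nonneg
  have hq := h.eta_add_mul_pos ht
  have hp := h.neg_majorantDeriv_pos ht hta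
  have hl := h.one_sub_majorantRatio_pos ht hta
  unfold majorantErrorCoeff halleyErrorCoeff
  positivity

lemma majorantErrorCoeff_mono (h : IsDescendingRoot β η L a) (ht : 0 ≤ t) (hta : t < a)
    (hd : d ≤ d') : majorantErrorCoeff β η L t d ≤ majorantErrorCoeff β η L t d' := by
  have hL := h.lipschitz_nonneg
  have hq := h.eta_add_mul_pos ht
  have hp := h.neg_majorantDeriv_pos ht hta
  have hl := h.one_sub_majorantRatio_pos ht hta
  unfold majorantErrorCoeff halleyErrorCoeff
  gcongr

lemma majorantHalley_lt (h : IsDescendingRoot β η L a) (ht : 0 ≤ t) (hta : t < a) :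
    majorantHalley β η L t < a := by
  have hd : 0 < a - t := sub_pos.2 hta
  have hcoeff := h.majorantErrorCoeff_pos ht hta hd.le
  rw [← sub_pos, h.sub_majorantHalley_eq ht hta]
  positivity

lemma lt_majorantHalley (h : IsDescendingRoot β η L a) (ht : 0 ≤ t) (hta : t < a) :
    t < majorantHalley β η L t :=
  sub_pos.1 ((h.majorant_pos ht hta).trans_le (h.le_majorantHalley_sub ht hta))

lemma majorant_majorantHalley (h : IsDescendingRoot β η L a) (ht : 0 ≤ t) (hta : t < a) :
    majorant β η L (majorantHalley β η L t)
      = (η + L * t) / 2 * majorantRatio β η L t * (majorantHalley β η L t - t) ^ 2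
        + L / 6 * (majorantHalley β η L t - t) ^ 3 := by
  have hp := (h.neg_majorantDeriv_pos ht hta).ne'
  have hratio := h.two_mul_sq_mul_majorantRatio ht hta
  have hstep := h.majorantHalley_sub_mul ht hta
  set s := majorantHalley β η L t - t with hs
  have htaylor : majorant β η L (majorantHalley β η L t) = majorant β η L t
      + majorantDeriv η L t * s + (η + L * t) / 2 * s ^ 2 + L / 6 * s ^ 3 := by
    rw [hs]
    unfold majorant majorantDeriv
    ring
  have hcancel : majorant β η L t + majorantDeriv η L t * s + (η + L * t) / 2 * s ^ 2
      = (η + L * t) / 2 * majorantRatio β η L t * s ^ 2 := by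
    refine mul_left_cancel₀ hp ?_
    linear_combination ((η + L * t) * s / 2 + majorantDeriv η L t) * hstep - s / 2 * hratio
  rw [htaylor, hcancel]

lemma majorantErrorCoeff_le (h : IsDescendingRoot β η L a) (ht : 0 ≤ t) (hta : t < a) :
    majorantErrorCoeff β η L t (a - t)
      ≤ (3 * (η + L * a) ^ 2 + 2 * L * (1 - η * a - L * a ^ 2 / 2))
        / (9 * (1 - η * a - L * a ^ 2 / 2) ^ 2) := by
  have hL := h.lipschitz_nonneg
  have hq := h.eta_add_mul_pos ht
  have : 0 < a - t := sub_pos.2 hta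
  have hP : 0 < -majorantDeriv η L a := neg_pos.2 h.majorantDeriv_neg
  have hPp := h.neg_majorantDeriv_le ht hta
  have hp := h.neg_majorantDeriv_pos ht hta
  have hl := h.one_sub_majorantRatio_pos ht hta
  have hinv : 1 / (1 - majorantRatio β η L t) ≤ 4 / 3 := by
    rw [div_le_div_iff₀ hl three_pos]
    linarith [h.majorantRatio_le_quarter ht hta]
  have hQ : η + L * a = η + L * t + L * (a - t) := by ring
  have hP_eq : 1 - η * a - L * a ^ 2 / 2 = -majorantDeriv η L a := by
    unfold majorantDeriv
    ring
  rw [majorantErrorCoeff, halleyErrorCoeff, hQ, hP_eq]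
  set p := -majorantDeriv η L t
  set P := -majorantDeriv η L a
  set q := η + L * t
  have hLd : 0 ≤ L * (a - t) := by positivity
  calc (L / (6 * p) + q ^ 2 / (4 * p ^ 2) + L * q * (a - t) / (12 * p ^ 2))
        / (1 - majorantRatio β η L t)
      = 1 / (1 - majorantRatio β η L t)
        * (L / (6 * p) + q ^ 2 / (4 * p ^ 2) + L * q * (a - t) / (12 * p ^ 2)) := by ring
    _ ≤ 4 / 3 * (L / (6 * p) + q ^ 2 / (4 * p ^ 2) + L * q * (a - t) / (12 * p ^ 2)) := by
        gcongr
    _ = 2 * L / (9 * p) + (3 * q ^ 2 + q * (L * (a - t))) / (9 * p ^ 2) := by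
        field_simp
        ring
    _ ≤ 2 * L / (9 * P) + 3 * (q + L * (a - t)) ^ 2 / (9 * P ^ 2) := by
        gcongr
        nlinarith
    _ = (3 * (q + L * (a - t)) ^ 2 + 2 * L * P) / (9 * P ^ 2) := by
        field_simp
        ring

lemma mem_Ico_of_majorantHalley (h : IsDescendingRoot β η L a) {t : ℕ → ℝ} (ht₀ : t 0 = 0)
    (ht : ∀ k, t (k + 1) = majorantHalley β η L (t k)) (k : ℕ) : t k ∈ Ico 0 a := by
  induction k with
  | zero => exact ⟨ht₀.ge, ht₀.trans_lt h.pos⟩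
  | succ k ih =>
    rw [ht]
    exact ⟨ih.1.trans (h.lt_majorantHalley ih.1 ih.2).le, h.majorantHalley_lt ih.1 ih.2⟩

end IsDescendingRoot

end Majorant

section NormalizedProblem

variable {X : Type*} [NormedAddCommGroup X] [NormedSpace ℝ X] {D : Set X} {g : X → X}
  {g' : X → X →L[ℝ] X} {g'' : X → X →L[ℝ] X →L[ℝ] X} {x₀ x y z : X} {β η L a b τ : ℝ} {t : ℕ → ℝ}

/-- The hypotheses of the Kantorovich theorem for Halley's method, normalized so that the derivative
at the initial point is the identity; `g'` and `g''` stand for the first two derivatives of `g`,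
and `a` is the radius of the ball in which the iteration takes place. -/
structure HalleyKantorovich (D : Set X) (g : X → X) (g' : X → X →L[ℝ] X)
    (g'' : X → X →L[ℝ] X →L[ℝ] X) (x₀ : X) (β η L a : ℝ) : Prop where
  convex : Convex ℝ D
  closedBall_subset : closedBall x₀ a ⊆ D
  hasFDerivAt : ∀ x ∈ D, HasFDerivAt g (g' x) x
  hasFDerivAt_deriv : ∀ x ∈ D, HasFDerivAt g' (g'' x) x
  deriv_eq_id : g' x₀ = ContinuousLinearMap.id ℝ X
  norm_image_le : ‖g x₀‖ ≤ β
  norm_deriv₂_le : ‖g'' x₀‖ ≤ η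
  lipschitz : ∀ x ∈ D, ∀ y ∈ D, ‖g'' y - g'' x‖ ≤ L * ‖y - x‖
  root : IsDescendingRoot β η L a

/-- The distance of `x` to `x₀` and the residual `g x` are dominated by `τ` and by the value of
the majorizing cubic at `τ`; this is the invariant of the iteration. -/
structure IsMajorizedAt (g : X → X) (x₀ : X) (β η L τ : ℝ) (x : X) : Prop where
  norm_sub_le : ‖x - x₀‖ ≤ τ
  norm_image_le : ‖g x‖ ≤ majorant β η L τ

namespace HalleyKantorovich

lemma center_mem (h : HalleyKantorovich D g g' g'' x₀ β η L a) : x₀ ∈ D :=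
  h.closedBall_subset (mem_closedBall_self h.root.pos.le)

lemma norm_deriv₂_le_add (h : HalleyKantorovich D g g' g'' x₀ β η L a) (hx : x ∈ D) :
    ‖g'' x‖ ≤ η + L * ‖x - x₀‖ := by
  linarith [norm_le_norm_add_norm_sub' (g'' x) (g'' x₀), h.norm_deriv₂_le,
    h.lipschitz _ h.center_mem _ hx]

lemma norm_id_sub_deriv_le (h : HalleyKantorovich D g g' g'' x₀ β η L a) (hx : x ∈ D) :
    ‖ContinuousLinearMap.id ℝ X - g' x‖ ≤ 1 + majorantDeriv η L ‖x - x₀‖ := by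
  have htaylor := norm_sub_sub_fderiv_le_of_lipschitz_at (h.convex.starConvex h.center_mem)
    h.hasFDerivAt_deriv (h.lipschitz _ h.center_mem) hx
  have hlinear : ‖g'' x₀ (x - x₀)‖ ≤ η * ‖x - x₀‖ :=
    ContinuousLinearMap.le_of_opNorm_le _ h.norm_deriv₂_le _
  calc ‖ContinuousLinearMap.id ℝ X - g' x‖
      = ‖g' x - g' x₀ - g'' x₀ (x - x₀) + g'' x₀ (x - x₀)‖ := by
        rw [sub_add_cancel, h.deriv_eq_id, norm_sub_rev]
    _ ≤ L / 2 * ‖x - x₀‖ ^ 2 + η * ‖x - x₀‖ := norm_add_le_of_le htaylor hlinear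
    _ = 1 + majorantDeriv η L ‖x - x₀‖ := by
        unfold majorantDeriv
        ring

lemma norm_taylorRemainder₂_le (h : HalleyKantorovich D g g' g'' x₀ β η L a) (hx : x ∈ D)
    (hy : y ∈ D) : ‖taylorRemainder₂ g g' g'' x y‖ ≤ L / 6 * ‖y - x‖ ^ 3 :=
  norm_taylorRemainder₂_le_of_lipschitz_at (h.convex.starConvex hx) h.hasFDerivAt
    h.hasFDerivAt_deriv (h.lipschitz _ hx) hy

lemma mem_of_norm_sub_lt (h : HalleyKantorovich D g g' g'' x₀ β η L a) (hτ : τ < a)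
    (hx : ‖x - x₀‖ ≤ τ) : x ∈ D :=
  h.closedBall_subset (mem_closedBall_iff_norm.2 (hx.trans hτ.le))

lemma norm_deriv₂_le_of_norm_sub_le (h : HalleyKantorovich D g g' g'' x₀ β η L a) (hτ : τ < a)
    (hx : ‖x - x₀‖ ≤ τ) : ‖g'' x‖ ≤ η + L * τ := by
  have hL := h.root.lipschitz_nonneg
  refine (h.norm_deriv₂_le_add (h.mem_of_norm_sub_lt hτ hx)).trans ?_
  gcongr

lemma eq_of_image_eq_zero (h : HalleyKantorovich D g g' g'' x₀ β η L a) (hab : a < b)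
    (hb : majorant β η L b = 0) (hxa : x ∈ closedBall x₀ a) (hx : g x = 0) (hyD : y ∈ D)
    (hyb : y ∈ ball x₀ b) (hy : g y = 0) : y = x := by
  have hxD := h.closedBall_subset hxa
  rw [mem_closedBall_iff_norm] at hxa
  rw [mem_ball_iff_norm] at hyb
  obtain ⟨ρ, hρ, hρb⟩ := exists_between (max_lt hyb hab)
  obtain ⟨hyρ, haρ⟩ := max_lt_iff.1 hρ
  have hneg : majorant β η L ρ < majorant β η L a := by
    rw [h.root.majorant_eq_zero]
    exact majorant_neg_of_between_roots h.root.eta_pos h.root.lipschitz_nonneg h.root.pos.le haρ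
      hρb h.root.majorant_eq_zero hb
  exact (eq_of_image_eq_of_majorant_lt h.convex h.hasFDerivAt hasDerivAt_majorant
    (majorantDeriv_strictMonoOn h.root.eta_pos h.root.lipschitz_nonneg).monotoneOn
    (fun _ => h.norm_id_sub_deriv_le) hxD hyD hxa hyρ.le haρ hneg
    (hx.trans hy.symm)).symm

variable [CompleteSpace X]

lemma exists_isHalleyStep (h : HalleyKantorovich D g g' g'' x₀ β η L a) (hτ : τ ∈ Ico 0 a)
    (hx : IsMajorizedAt g x₀ β η L τ x) :
    ∃ e m : X ≃L[ℝ] X, IsHalleyStep g g' g'' x e m (halleyMap g g' g'' x) ∧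
      ‖(e.symm : X →L[ℝ] X)‖ ≤ (-majorantDeriv η L τ)⁻¹ ∧
      ‖halleyOperator e (g'' x) (g x)‖ ≤ majorantRatio β η L τ := by
  have hmono : majorantDeriv η L ‖x - x₀‖ ≤ majorantDeriv η L τ :=
    (majorantDeriv_strictMonoOn h.root.eta_pos h.root.lipschitz_nonneg).monotoneOn
      (norm_nonneg (x - x₀)) hτ.1 hx.norm_sub_le
  have hderiv : ‖ContinuousLinearMap.id ℝ X - g' x‖ ≤ 1 - -majorantDeriv η L τ := by
    linarith [h.norm_id_sub_deriv_le (h.mem_of_norm_sub_lt hτ.2 hx.norm_sub_le)]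
  have hratio : majorant β η L τ * (η + L * τ) / (2 * (-majorantDeriv η L τ) ^ 2)
      = majorantRatio β η L τ := by rw [neg_sq, majorantRatio]
  rw [← hratio]
  refine exists_isHalleyStep_halleyMap (h.root.neg_majorantDeriv_pos hτ.1 hτ.2) hderiv
    (h.norm_deriv₂_le_of_norm_sub_le hτ.2 hx.norm_sub_le) hx.norm_image_le ?_
  rw [hratio]
  exact sub_pos.1 (h.root.one_sub_majorantRatio_pos hτ.1 hτ.2)

lemma norm_halleyMap_sub_le (h : HalleyKantorovich D g g' g'' x₀ β η L a) (hτ : τ ∈ Ico 0 a)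
    (hx : IsMajorizedAt g x₀ β η L τ x) :
    ‖halleyMap g g' g'' x - x‖ ≤ majorantHalley β η L τ - τ := by
  obtain ⟨e, m, hstep, he, hK⟩ := h.exists_isHalleyStep hτ hx
  rw [majorantHalley_sub]
  exact hstep.norm_sub_le he hx.norm_image_le hK
    (sub_pos.1 (h.root.one_sub_majorantRatio_pos hτ.1 hτ.2))

lemma isMajorizedAt_halleyMap (h : HalleyKantorovich D g g' g'' x₀ β η L a) (hτ : τ ∈ Ico 0 a)
    (hx : IsMajorizedAt g x₀ β η L τ x) :
    IsMajorizedAt g x₀ β η L (majorantHalley β η L τ) (halleyMap g g' g'' x) := by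
  obtain ⟨e, m, hstep, -, hK⟩ := h.exists_isHalleyStep hτ hx
  have hmove := h.norm_halleyMap_sub_le hτ hx
  have hnear : ‖halleyMap g g' g'' x - x₀‖ ≤ majorantHalley β η L τ := by
    linarith [norm_sub_le_norm_sub_add_norm_sub (halleyMap g g' g'' x) x x₀, hx.norm_sub_le]
  refine ⟨hnear, ?_⟩
  rw [h.root.majorant_majorantHalley hτ.1 hτ.2]
  exact hstep.norm_image_le (h.norm_deriv₂_le_of_norm_sub_le hτ.2 hx.norm_sub_le) hK hmove
    h.root.lipschitz_nonneg (h.norm_taylorRemainder₂_le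
      (h.mem_of_norm_sub_lt hτ.2 hx.norm_sub_le)
      (h.mem_of_norm_sub_lt (h.root.majorantHalley_lt hτ.1 hτ.2) hnear))

lemma norm_sub_halleyMap_le (h : HalleyKantorovich D g g' g'' x₀ β η L a) (hτ : τ ∈ Ico 0 a)
    (hx : IsMajorizedAt g x₀ β η L τ x) (hzD : z ∈ D) (hz : g z = 0) (hza : ‖z - x‖ ≤ a - τ) :
    ‖z - halleyMap g g' g'' x‖ ≤ majorantErrorCoeff β η L τ (a - τ) * ‖z - x‖ ^ 3 := by
  obtain ⟨e, m, hstep, he, hK⟩ := h.exists_isHalleyStep hτ hx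
  calc ‖z - halleyMap g g' g'' x‖ ≤ majorantErrorCoeff β η L τ ‖z - x‖ * ‖z - x‖ ^ 3 :=
        hstep.norm_error_le he (h.norm_deriv₂_le_of_norm_sub_le hτ.2 hx.norm_sub_le) hK
          (sub_pos.1 (h.root.one_sub_majorantRatio_pos hτ.1 hτ.2)) hz
          (h.norm_taylorRemainder₂_le (h.mem_of_norm_sub_lt hτ.2 hx.norm_sub_le) hzD)
    _ ≤ majorantErrorCoeff β η L τ (a - τ) * ‖z - x‖ ^ 3 := by
        gcongr
        exact h.root.majorantErrorCoeff_mono hτ.1 hτ.2 hza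

lemma isMajorizedAt_iterate (h : HalleyKantorovich D g g' g'' x₀ β η L a) (ht₀ : t 0 = 0)
    (ht : ∀ k, t (k + 1) = majorantHalley β η L (t k)) (k : ℕ) :
    IsMajorizedAt g x₀ β η L (t k) ((halleyMap g g' g'')^[k] x₀) := by
  induction k with
  | zero =>
    rw [ht₀]
    exact ⟨by simp, majorant_zero.symm ▸ h.norm_image_le⟩
  | succ k ih =>
    rw [ht, Function.iterate_succ_apply']
    exact h.isMajorizedAt_halleyMap (h.root.mem_Ico_of_majorantHalley ht₀ ht k) ih

lemma exists_isHalleyStep_iterate (h : HalleyKantorovich D g g' g'' x₀ β η L a) (ht₀ : t 0 = 0)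
    (ht : ∀ k, t (k + 1) = majorantHalley β η L (t k)) (k : ℕ) :
    ∃ e m : X ≃L[ℝ] X, IsHalleyStep g g' g'' ((halleyMap g g' g'')^[k] x₀) e m
      ((halleyMap g g' g'')^[k + 1] x₀) := by
  obtain ⟨e, m, hstep, -⟩ := h.exists_isHalleyStep (h.root.mem_Ico_of_majorantHalley ht₀ ht k)
    (h.isMajorizedAt_iterate ht₀ ht k)
  exact ⟨e, m, (Function.iterate_succ_apply' _ _ _).symm ▸ hstep⟩

lemma iterate_mem_ball (h : HalleyKantorovich D g g' g'' x₀ β η L a) (ht₀ : t 0 = 0)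
    (ht : ∀ k, t (k + 1) = majorantHalley β η L (t k)) (k : ℕ) :
    (halleyMap g g' g'')^[k] x₀ ∈ ball x₀ a :=
  mem_ball_iff_norm.2 ((h.isMajorizedAt_iterate ht₀ ht k).norm_sub_le.trans_lt
    (h.root.mem_Ico_of_majorantHalley ht₀ ht k).2)

lemma tendsto_image_iterate (h : HalleyKantorovich D g g' g'' x₀ β η L a) (ht₀ : t 0 = 0)
    (ht : ∀ k, t (k + 1) = majorantHalley β η L (t k)) :
    Filter.Tendsto (fun k => g ((halleyMap g g' g'')^[k] x₀)) Filter.atTop (nhds 0) := by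
  have htmem := h.root.mem_Ico_of_majorantHalley ht₀ ht
  have hstep (k : ℕ) : majorant β η L (t k) ≤ t (k + 1) - t k :=
    (h.root.le_majorantHalley_sub (htmem k).1 (htmem k).2).trans_eq (by rw [ht])
  have hmono : Monotone t := monotone_nat_of_le_succ fun k =>
    sub_nonneg.1 ((h.root.majorant_pos (htmem k).1 (htmem k).2).le.trans (hstep k))
  exact squeeze_zero_norm
    (fun k => (h.isMajorizedAt_iterate ht₀ ht k).norm_image_le.trans (hstep k))
    (summable_sub_of_monotone_of_le hmono fun k => (htmem k).2.le).tendsto_atTop_zero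

lemma exists_tendsto_iterate (h : HalleyKantorovich D g g' g'' x₀ β η L a) (ht₀ : t 0 = 0)
    (ht : ∀ k, t (k + 1) = majorantHalley β η L (t k)) :
    ∃ z ∈ closedBall x₀ a,
      Filter.Tendsto (fun k => (halleyMap g g' g'')^[k] x₀) Filter.atTop (nhds z) ∧ g z = 0 ∧
      ∀ k, ‖z - (halleyMap g g' g'')^[k] x₀‖ ≤ a - t k := by
  have htmem := h.root.mem_Ico_of_majorantHalley ht₀ ht
  have hmove (k : ℕ) : dist ((halleyMap g g' g'')^[k] x₀) ((halleyMap g g' g'')^[k + 1] x₀)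
      ≤ t (k + 1) - t k := by
    rw [dist_eq_norm', Function.iterate_succ_apply', ht]
    exact h.norm_halleyMap_sub_le (htmem k) (h.isMajorizedAt_iterate ht₀ ht k)
  obtain ⟨z, hlim, hdist⟩ := exists_tendsto_of_dist_le_sub hmove fun k => (htmem k).2.le
  have hz : z ∈ closedBall x₀ a := by
    simpa only [mem_closedBall', Function.iterate_zero_apply, ht₀, sub_zero] using hdist 0
  have hcont := (h.hasFDerivAt z (h.closedBall_subset hz)).continuousAt.tendsto.comp hlim
  refine ⟨z, hz, hlim, tendsto_nhds_unique hcont (h.tendsto_image_iterate ht₀ ht), fun k => ?_⟩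
  rw [← dist_eq_norm']
  exact hdist k

lemma norm_sub_iterate_succ_le (h : HalleyKantorovich D g g' g'' x₀ β η L a) (ht₀ : t 0 = 0)
    (ht : ∀ k, t (k + 1) = majorantHalley β η L (t k)) (hzD : z ∈ D) (hz : g z = 0) {k : ℕ}
    (hzk : ‖z - (halleyMap g g' g'')^[k] x₀‖ ≤ a - t k) :
    ‖z - (halleyMap g g' g'')^[k + 1] x₀‖
      ≤ majorantErrorCoeff β η L (t k) (a - t k) * ‖z - (halleyMap g g' g'')^[k] x₀‖ ^ 3 := by
  rw [Function.iterate_succ_apply']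
  exact h.norm_sub_halleyMap_le (h.root.mem_Ico_of_majorantHalley ht₀ ht k)
    (h.isMajorizedAt_iterate ht₀ ht k) hzD hz hzk

end HalleyKantorovich

end NormalizedProblem

section AffineCovariance

variable {X Y : Type*} [NormedAddCommGroup X] [NormedSpace ℝ X] [NormedAddCommGroup Y]
  [NormedSpace ℝ Y] {D : Set X} {F : X → Y} {F' : X → X →L[ℝ] Y} {F'' : X → X →L[ℝ] X →L[ℝ] Y}
  {x₀ : X} {β η L a : ℝ}

lemma halleyKantorovich_symm_comp (e₀ : X ≃L[ℝ] Y) (he₀ : (e₀ : X →L[ℝ] Y) = F' x₀)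
    (hD : Convex ℝ D) (hball : closedBall x₀ a ⊆ D) (hF : ∀ x ∈ D, HasFDerivAt F (F' x) x)
    (hF' : ∀ x ∈ D, HasFDerivAt F' (F'' x) x)
    (hlip : ∀ x ∈ D, ∀ y ∈ D, ‖(ContinuousLinearMap.compL ℝ X Y X (e₀.symm : Y →L[ℝ] X)).comp
      (F'' y - F'' x)‖ ≤ L * ‖y - x‖)
    (hβ : ‖(e₀.symm : Y →L[ℝ] X) (F x₀)‖ ≤ β)
    (hη : ‖(ContinuousLinearMap.compL ℝ X Y X (e₀.symm : Y →L[ℝ] X)).comp (F'' x₀)‖ ≤ η)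
    (ha : IsDescendingRoot β η L a) :
    HalleyKantorovich D (fun x => e₀.symm (F x)) (fun x => (e₀.symm : Y →L[ℝ] X).comp (F' x))
      (fun x => (ContinuousLinearMap.compL ℝ X Y X (e₀.symm : Y →L[ℝ] X)).comp (F'' x))
      x₀ β η L a where
  convex := hD
  closedBall_subset := hball
  hasFDerivAt x hx := (e₀.symm : Y →L[ℝ] X).hasFDerivAt.comp x (hF x hx)
  hasFDerivAt_deriv x hx :=
    (ContinuousLinearMap.compL ℝ X Y X (e₀.symm : Y →L[ℝ] X)).hasFDerivAt.comp x (hF' x hx)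
  deriv_eq_id := by rw [← he₀, e₀.coe_symm_comp_coe]
  norm_image_le := hβ
  norm_deriv₂_le := hη
  lipschitz x hx y hy := by
    rw [← ContinuousLinearMap.comp_sub]
    exact hlip x hx y hy
  root := ha

end AffineCovariance

/-- Kantorovich-type convergence of Halley's method under the
affine covariant Lipschitz condition: if `‖F'(x₀)⁻¹[F''(y) - F''(x)]‖ ≤ L‖y - x‖`
on `D`, `‖F'(x₀)⁻¹F(x₀)‖ ≤ β`, `‖F'(x₀)⁻¹F''(x₀)‖ ≤ η` and
`β < b = 2(η + 2√(η² + 2L))/(3(η + √(η² + 2L))²)`, then the Halley sequence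
starting at `x₀` is well defined, stays in `B(x₀,t*)` and converges to a zero
`xs` of `F` in the closed ball of radius `t*`, unique in `B(x₀,t**)`, and the
error bounds hold, where `t*` is the smallest root of
`f(s) = β - s + (η/2)s² + (L/6)s³` in `[0,r₁]`, `r₁ = 2/(η + √(η² + 2L))` is the
positive root of `f'`, `t**` is the root of `f` in `[r₁,∞)`, and `(t_k)` is the
majorizing sequence generated by applying Halley's method to `f`. -/
theorem halley_method_kantorovich_lipschitz
    {X Y : Type*} [NormedAddCommGroup X] [NormedSpace ℝ X] [CompleteSpace X]
    [NormedAddCommGroup Y] [NormedSpace ℝ Y] [CompleteSpace Y]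
    (D : Set X) (hD : IsOpen D) (hDconv : Convex ℝ D)
    (F : X → Y) (F' : X → X →L[ℝ] Y) (F'' : X → X →L[ℝ] X →L[ℝ] Y)
    (hdF : ∀ x ∈ D, HasFDerivAt F (F' x) x)
    (hdF' : ∀ x ∈ D, HasFDerivAt F' (F'' x) x)
    (hcF'' : ContinuousOn F'' D)
    (x₀ : X) (hx₀ : x₀ ∈ D)
    (e0 : X ≃L[ℝ] Y) (he0 : (e0 : X →L[ℝ] Y) = F' x₀)
    (L β η : ℝ) (hL : 0 < L) (hβ : 0 < β) (hη : 0 < η)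
    (hlip : ∀ x ∈ D, ∀ y ∈ D,
      ‖(ContinuousLinearMap.compL ℝ X Y X (e0.symm : Y →L[ℝ] X)).comp
          (F'' y - F'' x)‖ ≤ L * ‖y - x‖)
    (hinit1 : ‖(e0.symm : Y →L[ℝ] X) (F x₀)‖ ≤ β)
    (hinit2 : ‖(ContinuousLinearMap.compL ℝ X Y X (e0.symm : Y →L[ℝ] X)).comp
        (F'' x₀)‖ ≤ η)
    (hcrit : β < 2 * (η + 2 * Real.sqrt (η ^ 2 + 2 * L)) /
        (3 * (η + Real.sqrt (η ^ 2 + 2 * L)) ^ 2))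
    (f f1 f2 : ℝ → ℝ)
    (hf : ∀ s, f s = β - s + η / 2 * s ^ 2 + L / 6 * s ^ 3)
    (hf1 : ∀ s, f1 s = -1 + η * s + L / 2 * s ^ 2)
    (hf2 : ∀ s, f2 s = η + L * s)
    (r1 : ℝ) (hr1 : r1 = 2 / (η + Real.sqrt (η ^ 2 + 2 * L)))
    (tstar : ℝ) (htsmem : tstar ∈ Icc 0 r1) (htszero : f tstar = 0)
    (htsmin : ∀ s ∈ Icc (0:ℝ) r1, f s = 0 → tstar ≤ s)
    (tstst : ℝ) (htssmem : tstst ∈ Ici r1) (htsszero : f tstst = 0)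
    (hballD : ball x₀ tstst ⊆ D)
    (t : ℕ → ℝ) (ht0 : t 0 = 0)
    (hrec : ∀ k, t (k + 1) =
      t k - (1 / (1 - f (t k) * f2 (t k) / (2 * (f1 (t k)) ^ 2))) * (f (t k) / f1 (t k))) :
    ∃ (x : ℕ → X) (e : ℕ → (X ≃L[ℝ] Y)) (m : ℕ → (X ≃L[ℝ] X)),
      x 0 = x₀ ∧
      (∀ k,
        ((e k : X →L[ℝ] Y) = F' (x k)) ∧
        ((m k : X →L[ℝ] X) = ContinuousLinearMap.id ℝ X -
          (2⁻¹ : ℝ) • (((e k).symm : Y →L[ℝ] X).comp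
            ((F'' (x k)) ((e k).symm (F (x k)))))) ∧
        (x (k + 1) = x k - (m k).symm ((e k).symm (F (x k))))) ∧
      (∀ k, x k ∈ ball x₀ tstar) ∧
      ∃ xs ∈ closedBall x₀ tstar,
        Filter.Tendsto x Filter.atTop (nhds xs) ∧ F xs = 0 ∧
        (∀ y ∈ ball x₀ tstst, F y = 0 → y = xs) ∧
        (∀ k, ‖xs - x (k + 1)‖ ≤
          (tstar - t (k + 1)) * (‖xs - x k‖ / (tstar - t k)) ^ 3) ∧
        (∀ k, ‖xs - x (k + 1)‖ ≤
          (3 * (η + L * tstar) ^ 2 + 2 * L * (1 - η * tstar - L * tstar ^ 2 / 2)) /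
            (9 * (1 - η * tstar - L * tstar ^ 2 / 2) ^ 2) * ‖xs - x k‖ ^ 3) := by
  obtain rfl : f = majorant β η L := funext hf
  obtain rfl : f1 = majorantDeriv η L := funext hf1
  obtain rfl : f2 = fun s => η + L * s := funext hf2
  have har : tstar < r1 := htsmem.2.lt_of_ne fun h =>
    (majorant_minimizer_neg hη hL.le hr1 hcrit).ne (h ▸ htszero)
  have hab : tstar < tstst := har.trans_le htssmem
  have hroot := isDescendingRoot_of_lt hη hL.le hβ htsmem.1 har htszero
    (majorantDeriv_eq_zero hη hL.le hr1)
  have ht (k : ℕ) : t (k + 1) = majorantHalley β η L (t k) := hrec k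
  have htmem := hroot.mem_Ico_of_majorantHalley ht0 ht
  have H := halleyKantorovich_symm_comp e0 he0 hDconv
    ((closedBall_subset_ball hab).trans hballD) hdF hdF' hlip hinit1 hinit2 hroot
  obtain ⟨xs, hxs, hlim, hzero, hdist⟩ := H.exists_tendsto_iterate ht0 ht
  choose e m hstep using H.exists_isHalleyStep_iterate ht0 ht
  have hstepF (k : ℕ) := (hstep k).of_comp e0.symm
  have herr (k : ℕ) :=
    H.norm_sub_iterate_succ_le ht0 ht (H.closedBall_subset hxs) hzero (hdist k)
  refine ⟨_, fun k => (e k).trans e0.symm.symm, m, rfl,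
    fun k => ⟨(hstepF k).deriv_eq, (hstepF k).operator_eq, (hstepF k).next_eq⟩,
    H.iterate_mem_ball ht0 ht, xs, hxs, hlim, e0.symm.map_eq_zero_iff.1 hzero,
    fun y hy hFy => H.eq_of_image_eq_zero hab htsszero hxs hzero (hballD hy) hy
      (e0.symm.map_eq_zero_iff.2 hFy),
    fun k => ?_, fun k => (herr k).trans ?_⟩
  · rw [ht, hroot.sub_majorantHalley_mul_div_cube (htmem k).1 (htmem k).2]
    exact herr k
  · gcongr
    exact hroot.majorantErrorCoeff_le (htmem k).1 (htmem k).2
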